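/- Let Q be a Euclidean quiver and C an abelian, extension-closed subcategory of rep(Q) contained in the regular representations Reg. If C contains an indecomposable non-exceptional representation X, then C contains infinitely many pairwise non-isomorphic indecomposable representations. -/

import Mathlib

open Matrix BigOperators

/-- A finite quiver: `n` vertices, `a` arrows with source and target maps. -/
structure FinQuiver where
  n : ℕ
  a : ℕ
  src : Fin a → Fin n
  tgt : Fin a → Fin n

namespace FinQuiver

/-- A finite quiver is acyclic iff it admits a topological ordering of vertices. -/
def Acyclic (Q : FinQuiver) : Prop :=
  ∃ h : Fin Q.n → ℕ, ∀ x, h (Q.src x) < h (Q.tgt x)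

/-- Connectivity of the underlying graph. -/
def Connected (Q : FinQuiver) : Prop :=
  ∀ S : Finset (Fin Q.n), S.Nonempty → S ≠ Finset.univ →
    ∃ x, (Q.src x ∈ S ∧ Q.tgt x ∉ S) ∨ (Q.tgt x ∈ S ∧ Q.src x ∉ S)

/-- The Euler form ⟨d,e⟩ = Σ_i d_i e_i − Σ_{α : i → j} d_i e_j. -/
def euler (Q : FinQuiver) (d e : Fin Q.n → ℤ) : ℤ :=
  (∑ i, d i * e i) - ∑ x, d (Q.src x) * e (Q.tgt x)

/-- A (possibly disconnected) Dynkin quiver: acyclic with positive definite Tits form. -/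
def IsDynkin (Q : FinQuiver) : Prop :=
  Q.Acyclic ∧ ∀ d : Fin Q.n → ℤ, d ≠ 0 → 0 < Q.euler d d

/-- `δ` is the null root: positive, isotropic, and every isotropic vector is an
integer multiple of `δ`. -/
def IsNullRoot (Q : FinQuiver) (δ : Fin Q.n → ℤ) : Prop :=
  (∀ i, 0 < δ i) ∧ Q.euler δ δ = 0 ∧
    ∀ d : Fin Q.n → ℤ, Q.euler d d = 0 → ∃ m : ℤ, d = m • δ

/-- A Euclidean (affine) quiver: connected, acyclic, positive semidefinite Tits form
with a null root. -/
def IsEuclidean (Q : FinQuiver) : Prop :=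
  Q.Acyclic ∧ Q.Connected ∧ (∀ d, 0 ≤ Q.euler d d) ∧ ∃ δ, Q.IsNullRoot δ

end FinQuiver

/-- A finite-dimensional representation of `Q` over `k`: dimensions at each vertex,
and a matrix for each arrow. -/
structure QRep (k : Type) [Field k] (Q : FinQuiver) where
  d : Fin Q.n → ℕ
  mat : ∀ x : Fin Q.a, Matrix (Fin (d (Q.tgt x))) (Fin (d (Q.src x))) k

namespace QRep

variable {k : Type} [Field k] {Q : FinQuiver}

/-- The dimension vector of a representation, as an integer vector. -/
def dimVec (M : QRep k Q) : Fin Q.n → ℤ := fun i => (M.d i : ℤ)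

/-- The space of morphisms of representations `M → N`. -/
def homSpace (M N : QRep k Q) :
    Submodule k (∀ i, Matrix (Fin (N.d i)) (Fin (M.d i)) k) where
  carrier := {f | ∀ x, f (Q.tgt x) * M.mat x = N.mat x * f (Q.src x)}
  add_mem' := by
    intro f g hf hg x
    simp only [Pi.add_apply, Matrix.add_mul, Matrix.mul_add, hf x, hg x]
  zero_mem' := by intro x; simp
  smul_mem' := by
    intro c f hf x
    simp only [Pi.smul_apply, Matrix.smul_mul, Matrix.mul_smul, hf x]

/-- The standard map whose kernel is `Hom(M,N)` and cokernel is `Ext¹(M,N)`. -/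
def extMap (M N : QRep k Q) :
    (∀ i, Matrix (Fin (N.d i)) (Fin (M.d i)) k) →ₗ[k]
    (∀ x : Fin Q.a, Matrix (Fin (N.d (Q.tgt x))) (Fin (M.d (Q.src x))) k) where
  toFun f := fun x => f (Q.tgt x) * M.mat x - N.mat x * f (Q.src x)
  map_add' := by
    intro f g; funext x
    simp only [Pi.add_apply, Matrix.add_mul, Matrix.mul_add]
    abel
  map_smul' := by
    intro c f; funext x
    simp only [Pi.smul_apply, Matrix.smul_mul, Matrix.mul_smul, RingHom.id_apply,
      smul_sub]

/-- dim_k Hom(M,N). -/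
noncomputable def homDim (M N : QRep k Q) : ℕ :=
  Module.finrank k (homSpace M N)

/-- dim_k Ext¹(M,N), defined as the dimension of the cokernel of `extMap`. -/
noncomputable def extDim (M N : QRep k Q) : ℕ :=
  Module.finrank k
    ((∀ x : Fin Q.a, Matrix (Fin (N.d (Q.tgt x))) (Fin (M.d (Q.src x))) k) ⧸
      LinearMap.range (extMap M N))

/-- Isomorphism of representations. -/
def IsoRep (M N : QRep k Q) : Prop :=
  ∃ f ∈ homSpace M N, ∀ i, Function.Bijective (Matrix.mulVecLin (f i))

/-- `L` is (the source of a monomorphism into) a subrepresentation of `M`. -/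
def IsSubrep (L M : QRep k Q) : Prop :=
  ∃ f ∈ homSpace L M, ∀ i, Function.Injective (Matrix.mulVecLin (f i))

/-- `L` is a direct summand of `M` (split monomorphism with retraction). -/
def IsSummand (L M : QRep k Q) : Prop :=
  ∃ f ∈ homSpace L M, ∃ g ∈ homSpace M L, ∀ i, g i * f i = 1

/-- `M` is indecomposable: nonzero, and its endomorphism ring has no nontrivial
idempotents. -/
def Indec (M : QRep k Q) : Prop :=
  (∃ i, M.d i ≠ 0) ∧
    ∀ f ∈ homSpace M M, (∀ i, f i * f i = f i) → f = 0 ∨ f = 1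

/-- An exceptional representation: indecomposable and rigid. -/
def Exceptional (M : QRep k Q) : Prop :=
  Indec M ∧ extDim M M = 0

/-- `(f, g)` form a short exact sequence `0 → A → B → C → 0` of representations. -/
def IsSES (A B C : QRep k Q)
    (f : ∀ i, Matrix (Fin (B.d i)) (Fin (A.d i)) k)
    (g : ∀ i, Matrix (Fin (C.d i)) (Fin (B.d i)) k) : Prop :=
  f ∈ homSpace A B ∧ g ∈ homSpace B C ∧
    ∀ i, Function.Injective (Matrix.mulVecLin (f i)) ∧
      Function.Surjective (Matrix.mulVecLin (g i)) ∧
      LinearMap.range (Matrix.mulVecLin (f i)) = LinearMap.ker (Matrix.mulVecLin (g i))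

/-- A thick (= abelian and extension-closed, since rep(Q) is hereditary) full
subcategory: closed under isomorphism, direct summands and two-out-of-three for
short exact sequences. -/
def Thick (P : QRep k Q → Prop) : Prop :=
  (∀ M N, IsoRep M N → P M → P N) ∧
  (∀ L M, IsSummand L M → P M → P L) ∧
  (∀ A B C f g, IsSES A B C f g →
    ((P A → P B → P C) ∧ (P A → P C → P B) ∧ (P B → P C → P A)))

/-- `P` is the smallest thick subcategory containing `S`. -/
def GeneratedBy (P : QRep k Q → Prop) (S : Set (QRep k Q)) : Prop :=
  Thick P ∧ (∀ X ∈ S, P X) ∧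
    ∀ P' : QRep k Q → Prop, Thick P' → (∀ X ∈ S, P' X) → ∀ M, P M → P' M

/-- An exceptional sequence. -/
def ExcSeq {r : ℕ} (E : Fin r → QRep k Q) : Prop :=
  (∀ i, Exceptional (E i) ∧ homDim (E i) (E i) = 1) ∧
    ∀ i j : Fin r, i < j → homDim (E i) (E j) = 0 ∧ extDim (E i) (E j) = 0

/-- King's criterion for `⟨d,−⟩`-semi-stability. -/
def SemiStable (d : Fin Q.n → ℤ) (M : QRep k Q) : Prop :=
  Q.euler d M.dimVec = 0 ∧ ∀ L : QRep k Q, IsSubrep L M → Q.euler d L.dimVec ≤ 0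

/-- `M` is regular: every indecomposable summand pairs to zero with the null root. -/
def RegularRep (δ : Fin Q.n → ℤ) (M : QRep k Q) : Prop :=
  ∀ L, IsSummand L M → Indec L → Q.euler δ L.dimVec = 0

/-- `M` is in the right perpendicular category of `V`. -/
def RPerp (V M : QRep k Q) : Prop := homDim V M = 0 ∧ extDim V M = 0

/-- `M` is in the left perpendicular category of `V`. -/
def LPerp (V M : QRep k Q) : Prop := homDim M V = 0 ∧ extDim M V = 0

/-- `P` is a projective representation (Ext¹(P,−) = 0). -/
def IsProjRep (P : QRep k Q) : Prop := ∀ M : QRep k Q, extDim P M = 0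

end QRep

/-- `α` is a Schur root: the dimension vector of an indecomposable representation
with trivial endomorphism ring. -/
def IsSchurRoot (k : Type) [Field k] (Q : FinQuiver) (α : Fin Q.n → ℤ) : Prop :=
  ∃ M : QRep k Q, M.dimVec = α ∧ QRep.Indec M ∧ QRep.homDim M M = 1

/-- `ext(α,β) = 0`: some representations of these dimension vectors have no
extensions. -/
def ExtZero (k : Type) [Field k] (Q : FinQuiver) (α β : Fin Q.n → ℤ) : Prop :=
  ∃ M N : QRep k Q, M.dimVec = α ∧ N.dimVec = β ∧ QRep.extDim M N = 0

/-- Kac's characterization of the canonical decomposition: `c` is the canonical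
decomposition of `d` iff the entries sum to `d`, are Schur roots, and are pairwise
ext-orthogonal. -/
def IsCanonDecomp (k : Type) [Field k] (Q : FinQuiver) (d : Fin Q.n → ℤ)
    (c : List (Fin Q.n → ℤ)) : Prop :=
  c.sum = d ∧ (∀ α ∈ c, IsSchurRoot k Q α) ∧
    ∀ i j : Fin c.length, i ≠ j → ExtZero k Q (c.get i) (c.get j)

/-!
Choose in `C` a non-rigid indecomposable `X` of minimal total dimension. It is a brick. Otherwise
take a minimal proper nonzero image `I` of an endomorphism of `X`; then every nonzero map `I ⟶ X` is
injective, and `I` embeds into the kernel `K` of `X ⟶ I`, hence into some indecomposable summand `L`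
of `K`. By minimality `Ext¹(L, L) = 0`, so `Ext¹(I, L) = 0` because `rep(Q)` is hereditary, and the
projection `K ⟶ L` extends to `X`. This makes `L` a proper summand of `X`, which is absurd.

A brick `X` with a nonsplit self-extension `γ` starts an infinite tower inside `C`: if `X` is the
simple socle of an iterated self-extension `Y` with inclusion `s : X ⟶ Y`, lift `γ` along the
surjection `Ext¹(Y, X) → Ext¹(X, X)` to an extension `0 → X → W → Y → 0`. As `s` does not lift to
`W`, the new `X` is again the socle of `W`. Representations with simple socle are indecomposable,
and the dimensions in the tower are unbounded.
-/

/-! ### Matrices over a field -/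

section Matrix

variable {k : Type*} [Field k]

theorem exists_rank_factorization {m n : Type*} [Fintype m] [Fintype n] (A : Matrix m n k) :
    ∃ (r : ℕ) (j : Matrix m (Fin r) k) (p : Matrix (Fin r) n k) (l : Matrix (Fin r) m k)
      (q : Matrix n (Fin r) k), j * p = A ∧ l * j = 1 ∧ p * q = 1 := by
  classical
  let e := (Module.finBasis k (LinearMap.range A.toLin')).equivFun
  let j := (LinearMap.range A.toLin').subtype ∘ₗ e.symm.toLinearMap
  let p := e.toLinearMap ∘ₗ A.toLin'.rangeRestrict
  obtain ⟨l, hl⟩ := j.exists_leftInverse_of_injective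
    (LinearMap.ker_eq_bot.2 ((Submodule.subtype_injective _).comp e.symm.injective))
  obtain ⟨q, hq⟩ := p.exists_rightInverse_of_surjective
    (LinearMap.range_eq_top.2 (e.surjective.comp A.toLin'.surjective_rangeRestrict))
  have hjp : j ∘ₗ p = A.toLin' := LinearMap.ext fun v => by simp [j, p]
  refine ⟨_, j.toMatrix', p.toMatrix', l.toMatrix', q.toMatrix', ?_, ?_, ?_⟩
  · rw [← LinearMap.toMatrix'_comp, hjp, LinearMap.toMatrix'_toLin']
  · rw [← LinearMap.toMatrix'_comp, hl, LinearMap.toMatrix'_id]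
  · rw [← LinearMap.toMatrix'_comp, hq, LinearMap.toMatrix'_id]

theorem exists_idempotent_splitting {n : Type*} [Fintype n] {E : Matrix n n k}
    (hE : IsIdempotentElem E) :
    ∃ (r : ℕ) (j : Matrix n (Fin r) k) (t : Matrix (Fin r) n k), j * t = E ∧ t * j = 1 := by
  obtain ⟨r, j, t, l, q, rfl, hl, hq⟩ := exists_rank_factorization E
  refine ⟨r, j, t, rfl, ?_⟩
  calc t * j = (l * j) * (t * j) * (t * q) := by rw [hl, hq, Matrix.one_mul, Matrix.mul_one]
    _ = l * (j * t * (j * t)) * q := by simp only [Matrix.mul_assoc]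
    _ = (l * j) * (t * q) := by rw [hE.eq]; simp only [Matrix.mul_assoc]
    _ = 1 := by rw [hl, hq, Matrix.one_mul]

theorem exists_mul_mul_eq_self {m n : Type*} [Fintype m] [Fintype n] (A : Matrix m n k) :
    ∃ G : Matrix n m k, A * G * A = A := by
  obtain ⟨r, j, p, l, q, rfl, hl, hq⟩ := exists_rank_factorization A
  refine ⟨q * l, ?_⟩
  calc j * p * (q * l) * (j * p) = j * (p * q) * (l * j) * p := by simp only [Matrix.mul_assoc]
    _ = j * p := by rw [hl, hq, Matrix.mul_one, Matrix.mul_one]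

variable (k) in
theorem exists_directSum_matrices (m n : ℕ) :
    ∃ (ι : Matrix (Fin (m + n)) (Fin m) k) (ρ : Matrix (Fin m) (Fin (m + n)) k)
      (σ : Matrix (Fin (m + n)) (Fin n) k) (π : Matrix (Fin n) (Fin (m + n)) k),
      ρ * ι = 1 ∧ π * σ = 1 ∧ π * ι = 0 ∧ ρ * σ = 0 ∧ ι * ρ + σ * π = 1 := by
  let e : Fin (m + n) ≃ Fin m ⊕ Fin n := finSumFinEquiv.symm
  let ι : Matrix (Fin m ⊕ Fin n) (Fin m) k := fromRows 1 0
  let ρ : Matrix (Fin m) (Fin m ⊕ Fin n) k := fromCols 1 0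
  let σ : Matrix (Fin m ⊕ Fin n) (Fin n) k := fromRows 0 1
  let π : Matrix (Fin n) (Fin m ⊕ Fin n) k := fromCols 0 1
  have hsum : ι * ρ + σ * π = 1 := by
    simp only [ι, ρ, σ, π, fromRows_mul_fromCols, fromBlocks_add]
    simp
  refine ⟨ι.submatrix e id, ρ.submatrix id e, σ.submatrix e id, π.submatrix id e,
    ?_, ?_, ?_, ?_, ?_⟩
  iterate 4 simp [ι, ρ, σ, π, fromCols_mul_fromRows]
  calc ι.submatrix e id * ρ.submatrix id e + σ.submatrix e id * π.submatrix id e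
      = (ι * ρ + σ * π).submatrix e e := by
        rw [← submatrix_mul _ _ _ _ _ Function.bijective_id,
          ← submatrix_mul _ _ _ _ _ Function.bijective_id, submatrix_add]
        rfl
    _ = 1 := by rw [hsum, submatrix_one_equiv]

end Matrix

namespace QRep

open CategoryTheory

variable {k : Type} [Field k] {Q : FinQuiver} {A B C I K L M N X Y : QRep k Q}
  {P : QRep k Q → Prop}

/-! ### The category of representations -/

/-- Families of matrices, one at each vertex, with no compatibility with the arrows required.
Besides morphisms, they contain the vertexwise one-sided inverses of morphisms. -/
abbrev Family (M N : QRep k Q) : Type := ∀ i, Matrix (Fin (N.d i)) (Fin (M.d i)) k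

instance : Category (QRep k Q) where
  Hom M N := homSpace M N
  id M := ⟨1, fun x => by simp⟩
  comp f g := ⟨fun i => g.1 i * f.1 i, fun x => by
    rw [Matrix.mul_assoc, f.2 x, ← Matrix.mul_assoc, g.2 x, Matrix.mul_assoc]⟩
  id_comp f := Subtype.ext (funext fun i => Matrix.mul_one (f.1 i))
  comp_id f := Subtype.ext (funext fun i => Matrix.one_mul (f.1 i))
  assoc f g h := Subtype.ext (funext fun i => (Matrix.mul_assoc (h.1 i) (g.1 i) (f.1 i)).symm)

instance : Preadditive (QRep k Q) where
  homGroup M N := inferInstanceAs (AddCommGroup (homSpace M N))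
  add_comp _ _ _ f f' g := Subtype.ext (funext fun i => Matrix.mul_add (g.1 i) (f.1 i) (f'.1 i))
  comp_add _ _ _ f g g' := Subtype.ext (funext fun i => Matrix.add_mul (g.1 i) (g'.1 i) (f.1 i))

/-- The family of matrices underlying a morphism. -/
def app (f : M ⟶ N) : Family M N := Subtype.val f

instance : CoeFun (M ⟶ N) fun _ => Family M N := ⟨app⟩

/-- The morphism with a given family of matrices compatible with the arrows. -/
def homMk (f : Family M N) (hf : f ∈ homSpace M N) : M ⟶ N := ⟨f, hf⟩

theorem hom_ext {f g : M ⟶ N} (h : ∀ i, f i = g i) : f = g := Subtype.ext (funext h)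

@[simp] theorem homMk_apply (f : Family M N) (hf : f ∈ homSpace M N) (i : Fin Q.n) :
    homMk f hf i = f i := rfl
@[simp] theorem comp_apply (f : L ⟶ M) (g : M ⟶ N) (i : Fin Q.n) : (f ≫ g) i = g i * f i := rfl
@[simp] theorem zero_apply (i : Fin Q.n) : (0 : M ⟶ N) i = 0 := rfl

theorem comm (f : M ⟶ N) (x : Fin Q.a) :
    f (Q.tgt x) * M.mat x = N.mat x * f (Q.src x) := f.2 x

theorem congr_app {f g : M ⟶ N} (h : f = g) (i : Fin Q.n) : f i = g i := by rw [h]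

/-- The total dimension, the measure for all minimality arguments. -/
def totalDim (M : QRep k Q) : ℕ := ∑ i, M.d i

theorem id_ne_zero_iff : 𝟙 M ≠ 0 ↔ ∃ i, M.d i ≠ 0 := by
  constructor
  · contrapose!
    intro h
    refine hom_ext fun i => ?_
    have : IsEmpty (Fin (M.d i)) := by rw [h i]; infer_instance
    exact Subsingleton.elim _ _
  · rintro ⟨i, hi⟩ h
    have : Nonempty (Fin (M.d i)) := ⟨⟨0, Nat.pos_of_ne_zero hi⟩⟩
    exact one_ne_zero (congr_app h i)

theorem id_ne_zero_of_hom_ne_zero {f : M ⟶ N} (hf : f ≠ 0) : 𝟙 N ≠ 0 :=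
  fun h => hf (by rw [← Category.comp_id f, h, Limits.comp_zero])

/-- Injectivity of a morphism, expressed by left inverses at the vertices so that it can be used in
matrix computations. -/
def IsMonic (f : M ⟶ N) : Prop := ∃ l : Family N M, ∀ i, l i * f i = 1

/-- Surjectivity of a morphism, expressed by right inverses at the vertices. -/
def IsEpic (f : M ⟶ N) : Prop := ∃ q : Family N M, ∀ i, f i * q i = 1

theorem IsMonic.comp {f : L ⟶ M} {g : M ⟶ N} (hf : IsMonic f) (hg : IsMonic g) :
    IsMonic (f ≫ g) := by
  obtain ⟨l, hl⟩ := hf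
  obtain ⟨l', hl'⟩ := hg
  refine ⟨fun i => l i * l' i, fun i => ?_⟩
  rw [comp_apply, Matrix.mul_assoc, ← Matrix.mul_assoc (l' i), hl', Matrix.one_mul, hl]

theorem IsEpic.comp {f : L ⟶ M} {g : M ⟶ N} (hf : IsEpic f) (hg : IsEpic g) :
    IsEpic (f ≫ g) := by
  obtain ⟨q, hq⟩ := hf
  obtain ⟨q', hq'⟩ := hg
  refine ⟨fun i => q i * q' i, fun i => ?_⟩
  rw [comp_apply, Matrix.mul_assoc, ← Matrix.mul_assoc (f i), hq, Matrix.one_mul, hq']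

theorem IsMonic.of_comp {f : L ⟶ M} {g : M ⟶ N} (h : IsMonic (f ≫ g)) : IsMonic f := by
  obtain ⟨l, hl⟩ := h
  exact ⟨fun i => l i * g i, fun i => by rw [Matrix.mul_assoc, ← comp_apply, hl]⟩

theorem isMonic_of_isIso (f : M ⟶ N) [IsIso f] : IsMonic f :=
  ⟨inv f, fun i => congr_app (IsIso.hom_inv_id f) i⟩

theorem IsMonic.mono {f : M ⟶ N} (hf : IsMonic f) : Mono f := by
  obtain ⟨l, hl⟩ := hf
  refine ⟨fun g h hgh => hom_ext fun i => ?_⟩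
  have hi : f i * g i = f i * h i := congr_app hgh i
  calc g i = l i * (f i * g i) := by rw [← Matrix.mul_assoc, hl, Matrix.one_mul]
    _ = h i := by rw [hi, ← Matrix.mul_assoc, hl, Matrix.one_mul]

theorem IsMonic.ne_zero {f : M ⟶ N} (hf : IsMonic f) (hM : 𝟙 M ≠ 0) : f ≠ 0 := fun h =>
  have := hf.mono
  hM (Limits.zero_of_comp_mono f (by simp [h]))

theorem IsEpic.epi {f : M ⟶ N} (hf : IsEpic f) : Epi f := by
  obtain ⟨q, hq⟩ := hf
  refine ⟨fun g h hgh => hom_ext fun i => ?_⟩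
  have hi : g i * f i = h i * f i := congr_app hgh i
  calc g i = g i * f i * q i := by rw [Matrix.mul_assoc, hq, Matrix.mul_one]
    _ = h i := by rw [hi, Matrix.mul_assoc, hq, Matrix.mul_one]

theorem IsMonic.d_le {f : M ⟶ N} (hf : IsMonic f) (i : Fin Q.n) : M.d i ≤ N.d i := by
  obtain ⟨l, hl⟩ := hf
  exact rankCondition_iff_matrix.1 inferInstance _ _ (f i) (l i) (hl i)

theorem IsEpic.d_le {f : M ⟶ N} (hf : IsEpic f) (i : Fin Q.n) : N.d i ≤ M.d i := by
  obtain ⟨q, hq⟩ := hf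
  exact rankCondition_iff_matrix.1 inferInstance _ _ (q i) (f i) (hq i)

theorem IsMonic.totalDim_le {f : M ⟶ N} (hf : IsMonic f) : totalDim M ≤ totalDim N :=
  Finset.sum_le_sum fun i _ => hf.d_le i

theorem IsEpic.totalDim_le {f : M ⟶ N} (hf : IsEpic f) : totalDim N ≤ totalDim M :=
  Finset.sum_le_sum fun i _ => hf.d_le i

theorem isIso_of_inverse_matrices {f : M ⟶ N} (g : Family N M) (hfg : ∀ i, f i * g i = 1)
    (hgf : ∀ i, g i * f i = 1) : IsIso f := by
  have hg : g ∈ homSpace N M := fun x =>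
    calc g (Q.tgt x) * N.mat x = g (Q.tgt x) * (N.mat x * f (Q.src x)) * g (Q.src x) := by
          rw [Matrix.mul_assoc, Matrix.mul_assoc, hfg, Matrix.mul_one]
      _ = M.mat x * g (Q.src x) := by
          rw [← comm, ← Matrix.mul_assoc, hgf, Matrix.one_mul]
  exact ⟨homMk g hg, hom_ext hgf, hom_ext hfg⟩

theorem IsMonic.isIso {f : M ⟶ N} (hf : IsMonic f) (h : totalDim N ≤ totalDim M) : IsIso f := by
  have hd : ∀ i, M.d i = N.d i := fun i =>
    (Finset.sum_eq_sum_iff_of_le fun i _ => hf.d_le i).1 (hf.totalDim_le.antisymm h) i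
      (Finset.mem_univ i)
  obtain ⟨l, hl⟩ := hf
  exact isIso_of_inverse_matrices l
    (fun i => (Matrix.mul_eq_one_comm_of_card_eq _ _ _ (by simp [hd])).1 (hl i)) hl

theorem IsEpic.isIso {f : M ⟶ N} (hf : IsEpic f) (h : totalDim M ≤ totalDim N) : IsIso f := by
  have hd : ∀ i, N.d i = M.d i := fun i =>
    (Finset.sum_eq_sum_iff_of_le fun i _ => hf.d_le i).1 (hf.totalDim_le.antisymm h) i
      (Finset.mem_univ i)
  obtain ⟨q, hq⟩ := hf
  exact isIso_of_inverse_matrices q hq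
    (fun i => (Matrix.mul_eq_one_comm_of_card_eq _ _ _ (by simp [hd])).1 (hq i))

theorem IsoRep.totalDim_eq (h : IsoRep M N) : totalDim M = totalDim N := by
  obtain ⟨f, -, hf⟩ := h
  refine Finset.sum_congr rfl fun i _ => ?_
  simpa using (LinearEquiv.ofBijective _ (hf i)).finrank_eq

theorem indec_iff :
    Indec M ↔ 𝟙 M ≠ 0 ∧ ∀ e : M ⟶ M, e ≫ e = e → e = 0 ∨ e = 𝟙 M := by
  refine and_congr id_ne_zero_iff.symm ⟨fun h e he => ?_, fun h f hf he => ?_⟩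
  · exact (h e.1 e.2 fun i => congr_app he i).imp Subtype.ext Subtype.ext
  · exact (h (homMk f hf) (hom_ext he)).imp (congrArg Subtype.val) (congrArg Subtype.val)

theorem Indec.isIso_of_retract (hM : Indec M) (hL : 𝟙 L ≠ 0) {s : L ⟶ M} {r : M ⟶ L}
    (h : s ≫ r = 𝟙 L) : IsIso s := by
  have he : (r ≫ s) ≫ r ≫ s = r ≫ s := by
    rw [Category.assoc, reassoc_of% h]
  refine ⟨r, h, ((indec_iff.1 hM).2 _ he).resolve_left fun h0 => hL ?_⟩
  calc 𝟙 L = s ≫ (r ≫ s) ≫ r := by rw [Category.assoc, h, Category.comp_id, h]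
    _ = 0 := by rw [h0, Limits.zero_comp, Limits.comp_zero]

/-! ### Short exact sequences and extensions -/

theorem exists_subrep (E : Family M M) (hE : ∀ i, IsIdempotentElem (E i))
    (hEM : ∀ x, E (Q.tgt x) * (M.mat x * E (Q.src x)) = M.mat x * E (Q.src x)) :
    ∃ (L : QRep k Q) (j : L ⟶ M) (t : Family M L),
      (∀ i, t i * j i = 1) ∧ ∀ i, j i * t i = E i := by
  choose r j t hjt htj using fun i => exists_idempotent_splitting (hE i)
  let L : QRep k Q := ⟨r, fun x => t (Q.tgt x) * M.mat x * j (Q.src x)⟩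
  have hEj : ∀ i, E i * j i = j i := fun i => by
    rw [← hjt, Matrix.mul_assoc, htj, Matrix.mul_one]
  have hj : j ∈ homSpace L M := fun x =>
    calc j (Q.tgt x) * (t (Q.tgt x) * M.mat x * j (Q.src x))
        = E (Q.tgt x) * (M.mat x * E (Q.src x)) * j (Q.src x) := by
          rw [← hjt (Q.tgt x)]; simp only [Matrix.mul_assoc, hEj]
      _ = M.mat x * j (Q.src x) := by rw [hEM, Matrix.mul_assoc, hEj]
  exact ⟨L, homMk j hj, t, htj, hjt⟩

theorem exists_lift {j : L ⟶ M} {t : Family M L} (ht : ∀ i, t i * j i = 1) {f : N ⟶ M}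
    (hf : ∀ i, j i * (t i * f i) = f i) : ∃ g : N ⟶ L, g ≫ j = f := by
  have hg : (fun i => t i * f i : Family N L) ∈ homSpace N L := fun x =>
    calc t (Q.tgt x) * f (Q.tgt x) * N.mat x
        = t (Q.tgt x) * (M.mat x * (j (Q.src x) * (t (Q.src x) * f (Q.src x)))) := by
          rw [hf, Matrix.mul_assoc, comm]
      _ = t (Q.tgt x) * j (Q.tgt x) * (L.mat x * (t (Q.src x) * f (Q.src x))) := by
          rw [← Matrix.mul_assoc (M.mat x), ← comm]; simp only [Matrix.mul_assoc]
      _ = L.mat x * (t (Q.src x) * f (Q.src x)) := by rw [ht, Matrix.one_mul]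
  exact ⟨homMk _ hg, hom_ext hf⟩

theorem exists_image_factorization (f : M ⟶ N) :
    ∃ (I : QRep k Q) (p : M ⟶ I) (j : I ⟶ N), IsEpic p ∧ IsMonic j ∧ p ≫ j = f := by
  choose G hG using fun i => exists_mul_mul_eq_self (f i)
  have hE : ∀ i, IsIdempotentElem (f i * G i) := fun i => by
    rw [IsIdempotentElem, ← Matrix.mul_assoc, hG]
  have hEN : ∀ x, f (Q.tgt x) * G (Q.tgt x) * (N.mat x * (f (Q.src x) * G (Q.src x)))
      = N.mat x * (f (Q.src x) * G (Q.src x)) := fun x => by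
    rw [← Matrix.mul_assoc (N.mat x), ← comm]
    simp only [← Matrix.mul_assoc, hG]
  obtain ⟨I, j, t, htj, hjt⟩ := exists_subrep (fun i => f i * G i) hE hEN
  obtain ⟨p, hp⟩ := exists_lift htj (f := f) fun i => by rw [← Matrix.mul_assoc, hjt, hG]
  refine ⟨I, p, j, ⟨fun i => G i * j i, fun i => ?_⟩, ⟨t, htj⟩, hp⟩
  have htf : p i = t i * f i := by rw [← hp, comp_apply, ← Matrix.mul_assoc, htj, Matrix.one_mul]
  calc p i * (G i * j i) = t i * (f i * G i) * j i := by rw [htf]; simp only [Matrix.mul_assoc]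
    _ = (t i * j i) * (t i * j i) := by rw [← hjt]; simp only [Matrix.mul_assoc]
    _ = 1 := by rw [htj, Matrix.one_mul]

/-- A short exact sequence `0 → A → B → C → 0` with morphisms `f` and `g`, recorded through a
splitting of the underlying sequence of vector spaces at each vertex. -/
structure VertexSplitting (f : A ⟶ B) (g : B ⟶ C) where
  retr : Family B A
  sect : Family C B
  retr_mul : ∀ i, retr i * f i = 1
  mul_sect : ∀ i, g i * sect i = 1
  comp_eq_zero : f ≫ g = 0
  add_eq_one : ∀ i, f i * retr i + sect i * g i = 1

theorem extDim_eq_zero_iff : extDim M N = 0 ↔ Function.Surjective (extMap M N) := by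
  rw [extDim, Module.finrank_eq_zero_iff_of_free, Submodule.Quotient.subsingleton_iff,
    LinearMap.range_eq_top]

theorem IsMonic.extDim_eq_zero {i : I ⟶ L} (hi : IsMonic i) (h : extDim L N = 0) :
    extDim I N = 0 := by
  rw [extDim_eq_zero_iff] at h ⊢
  obtain ⟨l, hl⟩ := hi
  intro γ
  obtain ⟨φ, hφ⟩ := h fun x => γ x * l (Q.src x)
  refine ⟨fun v => φ v * i v, funext fun x => ?_⟩
  calc φ (Q.tgt x) * i (Q.tgt x) * I.mat x - N.mat x * (φ (Q.src x) * i (Q.src x))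
      = extMap L N φ x * i (Q.src x) := by
        rw [Matrix.mul_assoc, comm, ← Matrix.mul_assoc, ← Matrix.mul_assoc, ← Matrix.sub_mul]
        rfl
    _ = γ x := by rw [hφ, Matrix.mul_assoc, hl, Matrix.mul_one]

namespace VertexSplitting

variable {f : A ⟶ B} {g : B ⟶ C} (S : VertexSplitting f g)
include S

theorem isMonic : IsMonic f :=
  ⟨S.retr, S.retr_mul⟩

theorem isEpic : IsEpic g :=
  ⟨S.sect, S.mul_sect⟩

theorem retr_mul_sect (i : Fin Q.n) : S.retr i * S.sect i = 0 := by
  have h : S.retr i = S.retr i + S.retr i * S.sect i * g i :=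
    calc S.retr i = S.retr i * (f i * S.retr i + S.sect i * g i) := by
          rw [S.add_eq_one, Matrix.mul_one]
      _ = S.retr i + S.retr i * S.sect i * g i := by
          rw [Matrix.mul_add, ← Matrix.mul_assoc, S.retr_mul, Matrix.one_mul, Matrix.mul_assoc]
  calc S.retr i * S.sect i = S.retr i * S.sect i * g i * S.sect i := by
        rw [Matrix.mul_assoc _ (g i), S.mul_sect, Matrix.mul_one]
    _ = 0 := by rw [left_eq_add.1 h, Matrix.zero_mul]

theorem isSES : IsSES A B C f g := by
  refine ⟨f.2, g.2, fun i => ⟨?_, ?_, ?_⟩⟩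
  · exact Function.LeftInverse.injective (g := (S.retr i).mulVecLin) fun v => by
      simp [S.retr_mul]
  · exact Function.RightInverse.surjective (g := (S.sect i).mulVecLin) fun v => by
      simp [S.mul_sect]
  · ext v
    simp only [LinearMap.mem_range, LinearMap.mem_ker, Matrix.mulVecLin_apply]
    constructor
    · rintro ⟨w, rfl⟩
      rw [Matrix.mulVec_mulVec, ← comp_apply, S.comp_eq_zero, zero_apply, Matrix.zero_mulVec]
    · intro hv
      refine ⟨S.retr i *ᵥ v, ?_⟩
      calc f i *ᵥ S.retr i *ᵥ v = (f i * S.retr i + S.sect i * g i) *ᵥ v := by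
            simp [Matrix.add_mulVec, ← Matrix.mulVec_mulVec, hv]
        _ = v := by rw [S.add_eq_one, Matrix.one_mulVec]

theorem exists_lift {h : M ⟶ B} (hg : h ≫ g = 0) : ∃ h' : M ⟶ A, h' ≫ f = h :=
  QRep.exists_lift S.retr_mul fun i =>
    calc f i * (S.retr i * h i) = (f i * S.retr i + S.sect i * g i) * h i := by
          rw [Matrix.add_mul, Matrix.mul_assoc, Matrix.mul_assoc, ← comp_apply h g, hg, zero_apply,
            Matrix.mul_zero, add_zero]
      _ = h i := by rw [S.add_eq_one, Matrix.one_mul]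

theorem exists_desc {h : B ⟶ N} (hf : f ≫ h = 0) : ∃ h' : C ⟶ N, g ≫ h' = h := by
  have hh : ∀ i, h i * S.sect i * g i = h i := fun i =>
    calc h i * S.sect i * g i = h i * (f i * S.retr i + S.sect i * g i) := by
          rw [Matrix.mul_add, ← Matrix.mul_assoc _ (f i), ← comp_apply f h, hf, zero_apply,
            Matrix.zero_mul, zero_add, Matrix.mul_assoc]
      _ = h i := by rw [S.add_eq_one, Matrix.mul_one]
  refine ⟨homMk (fun i => h i * S.sect i) fun x => ?_, hom_ext hh⟩
  calc h (Q.tgt x) * S.sect (Q.tgt x) * C.mat x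
      = h (Q.tgt x) * S.sect (Q.tgt x) * (C.mat x * (g (Q.src x) * S.sect (Q.src x))) := by
        rw [S.mul_sect, Matrix.mul_one]
    _ = h (Q.tgt x) * S.sect (Q.tgt x) * g (Q.tgt x) * B.mat x * S.sect (Q.src x) := by
        rw [← Matrix.mul_assoc (C.mat x), ← comm]; simp only [Matrix.mul_assoc]
    _ = N.mat x * (h (Q.src x) * S.sect (Q.src x)) := by
        rw [hh, comm, Matrix.mul_assoc]

theorem exists_extend (hext : extDim C N = 0) (r : A ⟶ N) : ∃ R : B ⟶ N, f ≫ R = r := by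
  obtain ⟨φ, hφ⟩ := extDim_eq_zero_iff.1 hext
    fun x => r (Q.tgt x) * S.retr (Q.tgt x) * B.mat x * S.sect (Q.src x)
  have hφ' (x) : φ (Q.tgt x) * C.mat x - N.mat x * φ (Q.src x)
      = r (Q.tgt x) * S.retr (Q.tgt x) * B.mat x * S.sect (Q.src x) := congrFun hφ x
  have hdiff (x) : S.retr (Q.tgt x) * B.mat x
      = A.mat x * S.retr (Q.src x)
        + S.retr (Q.tgt x) * B.mat x * S.sect (Q.src x) * g (Q.src x) :=
    calc S.retr (Q.tgt x) * B.mat x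
        = S.retr (Q.tgt x) * (B.mat x * f (Q.src x)) * S.retr (Q.src x)
          + S.retr (Q.tgt x) * B.mat x * S.sect (Q.src x) * g (Q.src x) := by
          simp only [Matrix.mul_assoc]
          rw [← Matrix.mul_add, ← Matrix.mul_add, S.add_eq_one, Matrix.mul_one]
      _ = _ := by rw [← comm, ← Matrix.mul_assoc, S.retr_mul, Matrix.one_mul]
  refine ⟨homMk (fun i => r i * S.retr i - φ i * g i) fun x => ?_, hom_ext fun i => ?_⟩
  · calc (r (Q.tgt x) * S.retr (Q.tgt x) - φ (Q.tgt x) * g (Q.tgt x)) * B.mat x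
        = r (Q.tgt x) * (S.retr (Q.tgt x) * B.mat x) - φ (Q.tgt x) * C.mat x * g (Q.src x) := by
          rw [Matrix.sub_mul, Matrix.mul_assoc, Matrix.mul_assoc, comm, Matrix.mul_assoc]
      _ = r (Q.tgt x) * A.mat x * S.retr (Q.src x) - N.mat x * φ (Q.src x) * g (Q.src x) := by
          rw [hdiff, sub_eq_iff_eq_add.1 (hφ' x), Matrix.mul_add, Matrix.add_mul]
          simp only [Matrix.mul_assoc]
          abel
      _ = N.mat x * (r (Q.src x) * S.retr (Q.src x) - φ (Q.src x) * g (Q.src x)) := by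
          rw [comm, Matrix.mul_sub, Matrix.mul_assoc, Matrix.mul_assoc]
  · calc (r i * S.retr i - φ i * g i) * f i
        = r i * (S.retr i * f i) - φ i * (g i * f i) := by
          rw [Matrix.sub_mul, Matrix.mul_assoc, Matrix.mul_assoc]
      _ = r i := by
          rw [S.retr_mul, ← comp_apply f g, S.comp_eq_zero, zero_apply, Matrix.mul_zero,
            Matrix.mul_one, sub_zero]

end VertexSplitting

theorem exists_kernel {p : M ⟶ N} (hp : IsEpic p) :
    ∃ (K : QRep k Q) (j : K ⟶ M), Nonempty (VertexSplitting j p) := by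
  obtain ⟨σ, hσ⟩ := hp
  have hpE : ∀ i, p i * (1 - σ i * p i) = 0 := fun i => by
    rw [Matrix.mul_sub, ← Matrix.mul_assoc, hσ, Matrix.mul_one, Matrix.one_mul, sub_self]
  obtain ⟨K, j, t, htj, hjt⟩ := exists_subrep (fun i => 1 - σ i * p i)
    (fun i => by
      rw [IsIdempotentElem, Matrix.sub_mul, Matrix.mul_assoc, hpE, Matrix.one_mul, Matrix.mul_zero,
        sub_zero])
    (fun x => by
      rw [Matrix.sub_mul, Matrix.one_mul, Matrix.mul_assoc, ← Matrix.mul_assoc (p _), comm,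
        Matrix.mul_assoc (N.mat x), hpE, Matrix.mul_zero, Matrix.mul_zero, sub_zero])
  refine ⟨K, j, ⟨t, σ, htj, hσ, hom_ext fun i => ?_, fun i => by rw [hjt, sub_add_cancel]⟩⟩
  calc p i * j i = p i * (j i * t i) * j i := by
        rw [Matrix.mul_assoc, Matrix.mul_assoc, htj, Matrix.mul_one]
    _ = 0 := by rw [hjt, hpE, Matrix.zero_mul]

theorem exists_extension (γ : ∀ x, Matrix (Fin (A.d (Q.tgt x))) (Fin (C.d (Q.src x))) k) :
    ∃ (B : QRep k Q) (f : A ⟶ B) (g : B ⟶ C) (S : VertexSplitting f g),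
      (∀ x, B.mat x * S.sect (Q.src x) = S.sect (Q.tgt x) * C.mat x + f (Q.tgt x) * γ x) ∧
      ∀ x, S.retr (Q.tgt x) * B.mat x = A.mat x * S.retr (Q.src x) + γ x * g (Q.src x) := by
  choose ι ρ σ π hρι hπσ hπι hρσ hadd using
    fun i => exists_directSum_matrices k (A.d i) (C.d i)
  let B : QRep k Q := ⟨fun i => A.d i + C.d i, fun x =>
    ι (Q.tgt x) * A.mat x * ρ (Q.src x) + σ (Q.tgt x) * C.mat x * π (Q.src x)
      + ι (Q.tgt x) * γ x * π (Q.src x)⟩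
  have hι : ι ∈ homSpace A B := fun x => by
    simp only [B, Matrix.add_mul, Matrix.mul_assoc, hρι, hπι, Matrix.mul_one, Matrix.mul_zero,
      add_zero]
  have hπ : π ∈ homSpace B C := fun x => by
    simp only [B, Matrix.mul_add, ← Matrix.mul_assoc, hπσ, hπι, Matrix.one_mul, Matrix.zero_mul,
      zero_add, add_zero]
  refine ⟨B, homMk ι hι, homMk π hπ, ⟨ρ, σ, hρι, hπσ, hom_ext hπι, hadd⟩,
    fun x => ?_, fun x => ?_⟩
  · simp only [B, homMk_apply, Matrix.add_mul, Matrix.mul_assoc, hπσ, hρσ, Matrix.mul_one,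
      Matrix.mul_zero, zero_add]
  · simp only [B, homMk_apply, Matrix.mul_add, ← Matrix.mul_assoc, hρι, hρσ, Matrix.one_mul,
      Matrix.zero_mul, add_zero]

/-! ### Thick subcategories and direct summands -/

theorem Thick.of_retract (hP : Thick P) {s : L ⟶ M} {r : M ⟶ L} (h : s ≫ r = 𝟙 L) (hM : P M) :
    P L :=
  hP.2.1 L M ⟨s, s.2, r, r.2, congr_app h⟩ hM

theorem exists_extension_retract {p : A ⟶ I} {j : I ⟶ B} (hp : IsEpic p) (hj : IsMonic j) :
    ∃ (W : QRep k Q) (f : A ⟶ W) (g : W ⟶ B) (s : I ⟶ W) (r : W ⟶ I),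
      Nonempty (VertexSplitting f g) ∧ s ≫ r = 𝟙 I := by
  obtain ⟨σ, hσ⟩ := hp
  obtain ⟨τ, hτ⟩ := hj
  -- The failure of `σ` to be a morphism, transported along `τ`, is a cocycle in `Ext¹(B, A)`.
  obtain ⟨W, f, g, S, hsect, hretr⟩ := exists_extension (A := A) (C := B) fun x =>
    (σ (Q.tgt x) * I.mat x - A.mat x * σ (Q.src x)) * τ (Q.src x)
  have hs : (fun i => f i * σ i + S.sect i * j i : Family I W) ∈ homSpace I W := fun x =>
    calc (f (Q.tgt x) * σ (Q.tgt x) + S.sect (Q.tgt x) * j (Q.tgt x)) * I.mat x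
        = f (Q.tgt x) * A.mat x * σ (Q.src x) + (S.sect (Q.tgt x) * B.mat x * j (Q.src x)
          + f (Q.tgt x) * (σ (Q.tgt x) * I.mat x - A.mat x * σ (Q.src x))) := by
          rw [Matrix.add_mul, Matrix.mul_assoc _ (j _), comm j, Matrix.mul_sub]
          simp only [Matrix.mul_assoc]
          abel
      _ = f (Q.tgt x) * A.mat x * σ (Q.src x) + W.mat x * S.sect (Q.src x) * j (Q.src x) := by
          rw [hsect, Matrix.add_mul]
          simp only [Matrix.mul_assoc, hτ, Matrix.mul_one]
      _ = W.mat x * (f (Q.src x) * σ (Q.src x) + S.sect (Q.src x) * j (Q.src x)) := by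
          rw [comm, Matrix.mul_add, Matrix.mul_assoc, Matrix.mul_assoc]
  have hr : (fun i => p i * S.retr i : Family W I) ∈ homSpace W I := fun x =>
    calc p (Q.tgt x) * S.retr (Q.tgt x) * W.mat x
        = p (Q.tgt x) * A.mat x * S.retr (Q.src x)
          + (p (Q.tgt x) * σ (Q.tgt x) * I.mat x - p (Q.tgt x) * A.mat x * σ (Q.src x))
            * τ (Q.src x) * g (Q.src x) := by
          rw [Matrix.mul_assoc, hretr]
          simp only [Matrix.mul_add, Matrix.mul_sub, Matrix.sub_mul, Matrix.mul_assoc]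
      _ = I.mat x * (p (Q.src x) * S.retr (Q.src x)) := by
          rw [comm, Matrix.mul_assoc (I.mat x) _ (σ _), hσ, hσ, Matrix.one_mul, Matrix.mul_one,
            sub_self, Matrix.zero_mul, Matrix.zero_mul, add_zero, Matrix.mul_assoc]
  refine ⟨W, f, g, homMk _ hs, homMk _ hr, ⟨S⟩, hom_ext fun i => ?_⟩
  calc p i * S.retr i * (f i * σ i + S.sect i * j i)
      = p i * (S.retr i * f i) * σ i + p i * (S.retr i * S.sect i) * j i := by
        simp only [Matrix.mul_add, Matrix.mul_assoc]
    _ = 1 := by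
        rw [S.retr_mul, S.retr_mul_sect, Matrix.mul_one, hσ, Matrix.mul_zero, Matrix.zero_mul,
          add_zero]

theorem Thick.of_isEpic_of_isMonic (hP : Thick P) {p : A ⟶ I} {j : I ⟶ B} (hp : IsEpic p)
    (hj : IsMonic j) (hA : P A) (hB : P B) : P I := by
  obtain ⟨W, f, g, s, r, ⟨S⟩, hsr⟩ := exists_extension_retract hp hj
  exact hP.of_retract hsr ((hP.2.2 A W B f g S.isSES).2.1 hA hB)

theorem exists_retract_of_idempotent {e : M ⟶ M} (he : e ≫ e = e) :
    ∃ (L : QRep k Q) (s : L ⟶ M) (r : M ⟶ L), s ≫ r = 𝟙 L ∧ r ≫ s = e := by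
  obtain ⟨L, s, t, hts, hst⟩ := exists_subrep e (congr_app he) fun x => by
    rw [← comm, ← Matrix.mul_assoc, ← comp_apply e e, he]
  obtain ⟨r, hr⟩ := exists_lift hts (f := e) fun i => by
    rw [← Matrix.mul_assoc, hst, ← comp_apply e e, he]
  have : Mono s := IsMonic.mono ⟨t, hts⟩
  have hse : s ≫ e = s := hom_ext fun i => by
    rw [comp_apply, ← hst, Matrix.mul_assoc, hts, Matrix.mul_one]
  refine ⟨L, s, r, ?_, hr⟩
  rw [← cancel_mono s, Category.assoc, hr, hse, Category.id_comp]

theorem isMonic_of_retract {s : L ⟶ M} {r : M ⟶ L} (h : s ≫ r = 𝟙 L) : IsMonic s :=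
  ⟨r, congr_app h⟩

theorem totalDim_lt_of_retract {s : L ⟶ M} {r : M ⟶ L} (h : s ≫ r = 𝟙 L) (hne : r ≫ s ≠ 𝟙 M) :
    totalDim L < totalDim M := by
  refine (isMonic_of_retract h).totalDim_le.lt_of_not_ge fun hle => hne ?_
  have := (isMonic_of_retract h).isIso hle
  rw [← cancel_epi s, reassoc_of% h, Category.comp_id]

theorem exists_indec_retract {φ : N ⟶ K} (hφ : φ ≠ 0) :
    ∃ (L : QRep k Q) (s : L ⟶ K) (r : K ⟶ L), s ≫ r = 𝟙 L ∧ Indec L ∧ φ ≫ r ≠ 0 := by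
  let S : QRep k Q → Prop := fun L => ∃ (s : L ⟶ K) (r : K ⟶ L), s ≫ r = 𝟙 L ∧ φ ≫ r ≠ 0
  obtain ⟨L, hL⟩ := exists_minimalFor_of_wellFoundedLT S totalDim
    ⟨K, 𝟙 K, 𝟙 K, Category.comp_id _, by rwa [Category.comp_id]⟩
  obtain ⟨s, r, hsr, hr⟩ := hL.prop
  have hmin (e : L ⟶ L) (he : e ≫ e = e) (hφe : φ ≫ r ≫ e ≠ 0) : e = 𝟙 L := by
    by_contra hne
    obtain ⟨L', s', r', hsr', hrs'⟩ := exists_retract_of_idempotent he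
    refine hL.not_lt (j := L') ⟨s' ≫ s, r ≫ r', ?_, fun h0 => hφe ?_⟩
      (totalDim_lt_of_retract hsr' (hrs' ▸ hne))
    · rw [Category.assoc, reassoc_of% hsr, hsr']
    · rw [← hrs', reassoc_of% h0, Limits.zero_comp]
  refine ⟨L, s, r, hsr, indec_iff.2 ⟨id_ne_zero_of_hom_ne_zero hr, fun e he => ?_⟩, hr⟩
  by_cases hφe : φ ≫ r ≫ e = 0
  · left
    have he' : (𝟙 L - e) ≫ (𝟙 L - e) = 𝟙 L - e := by simp [he]
    exact sub_eq_self.1 (hmin _ he' (by simpa [hφe] using hr))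
  · exact Or.inr (hmin e he hφe)

/-! ### Bricks -/

/-- A brick: a nonzero representation whose endomorphism ring is a division ring. -/
def IsBrick (X : QRep k Q) : Prop := 𝟙 X ≠ 0 ∧ ∀ f : X ⟶ X, f ≠ 0 → IsIso f

theorem exists_minimal_image {f : X ⟶ X} (hf : f ≠ 0) (hfiso : ¬ IsIso f) :
    ∃ (I : QRep k Q) (p : X ⟶ I) (j : I ⟶ X), IsEpic p ∧ IsMonic j ∧ 𝟙 I ≠ 0 ∧
      totalDim I < totalDim X ∧ ∀ u : I ⟶ X, u ≠ 0 → IsMonic u := by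
  let S : QRep k Q → Prop := fun I => ∃ (p : X ⟶ I) (j : I ⟶ X), IsEpic p ∧ IsMonic j ∧
    𝟙 I ≠ 0 ∧ totalDim I < totalDim X
  have hS : ∃ I, S I := by
    obtain ⟨I, p, j, hp, hj, rfl⟩ := exists_image_factorization f
    refine ⟨I, p, j, hp, hj, fun h0 => hf ?_, hj.totalDim_le.lt_of_not_ge fun hle => hfiso ?_⟩
    · rw [← Category.id_comp j, h0, Limits.zero_comp, Limits.comp_zero]
    · have := hj.isIso hle
      have := hp.isIso hle
      infer_instance
  obtain ⟨I, hI⟩ := exists_minimalFor_of_wellFoundedLT S totalDim hS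
  obtain ⟨p, j, hp, hj, hI0, hIX⟩ := hI.prop
  refine ⟨I, p, j, hp, hj, hI0, hIX, fun u hu => ?_⟩
  obtain ⟨I', p', j', hp', hj', rfl⟩ := exists_image_factorization u
  have hI' : S I' := ⟨p ≫ p', j', hp.comp hp', hj', fun h0 => hu ?_,
    hp'.totalDim_le.trans_lt hIX⟩
  · have := hp'.isIso (not_lt.1 (hI.not_lt hI'))
    exact (isMonic_of_isIso p').comp hj'
  · rw [← Category.id_comp j', h0, Limits.zero_comp, Limits.comp_zero]

theorem isBrick_of_minimal (hP : Thick P) (hX : P X) (hXi : Indec X)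
    (hmin : ∀ L, P L → Indec L → totalDim L < totalDim X → extDim L L = 0) : IsBrick X := by
  refine ⟨(indec_iff.1 hXi).1, fun f hf => ?_⟩
  by_contra hfiso
  obtain ⟨I, p, j, hp, hj, hI, hIX, hmono⟩ := exists_minimal_image hf hfiso
  have := hp.epi
  have := hj.mono
  have hjp : j ≫ p = 0 := by
    by_contra hne
    have hmonic : IsMonic (j ≫ p) :=
      (hmono _ fun h => hne (Limits.zero_of_comp_mono j h) : IsMonic ((j ≫ p) ≫ j)).of_comp
    have := hmonic.isIso le_rfl
    have hretr : j ≫ p ≫ inv (j ≫ p) = 𝟙 I := by rw [← Category.assoc, IsIso.hom_inv_id]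
    have := hXi.isIso_of_retract hI hretr
    exact hIX.not_ge (isMonic_of_isIso (inv j)).totalDim_le
  obtain ⟨K, κ, ⟨S⟩⟩ := exists_kernel hp
  have hK : P K := (hP.2.2 K X I κ p S.isSES).2.2 hX (hP.of_isEpic_of_isMonic hp hj hX hX)
  obtain ⟨ι, hι⟩ := S.exists_lift hjp
  have hι0 : ι ≠ 0 := fun h => hI (Limits.zero_of_comp_mono j (by simp [← hι, h]))
  obtain ⟨L, s, r, hsr, hL, hιr⟩ := exists_indec_retract hι0
  have hsκ : IsMonic (s ≫ κ) := (isMonic_of_retract hsr).comp S.isMonic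
  have hsκ_iso : ¬ IsIso (s ≫ κ) := fun _ => by
    have hp0 : p = 0 := Limits.zero_of_epi_comp (s ≫ κ) (by simp [S.comp_eq_zero])
    exact hI (Limits.zero_of_epi_comp p (by simp [hp0]))
  have := hsκ.mono
  have hιr_monic : IsMonic (ι ≫ r) :=
    (hmono _ fun h => hιr (Limits.zero_of_comp_mono (s ≫ κ) h)).of_comp
  have hLL : extDim L L = 0 := hmin L (hP.of_retract hsr hK) hL
    (hsκ.totalDim_le.lt_of_not_ge fun hle => hsκ_iso (hsκ.isIso hle))
  obtain ⟨R, hR⟩ := S.exists_extend (hιr_monic.extDim_eq_zero hLL) r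
  exact hsκ_iso (hXi.isIso_of_retract (indec_iff.1 hL).1 (r := R)
    (by rw [Category.assoc, hR, hsr]))

theorem exists_isBrick (hP : Thick P) (hX : P X) (hXi : Indec X) (hXX : extDim X X ≠ 0) :
    ∃ Y, P Y ∧ IsBrick Y ∧ extDim Y Y ≠ 0 := by
  obtain ⟨Y, hY⟩ := exists_minimalFor_of_wellFoundedLT
    (fun Y => P Y ∧ Indec Y ∧ extDim Y Y ≠ 0) totalDim ⟨X, hX, hXi, hXX⟩
  obtain ⟨hPY, hYi, hYY⟩ := hY.prop
  refine ⟨Y, hPY, isBrick_of_minimal hP hPY hYi fun L hL hLi hlt => ?_, hYY⟩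
  by_contra hLL
  exact hY.not_lt ⟨hL, hLi, hLL⟩ hlt

/-! ### Towers of self-extensions of a brick -/

/-- `s : X ⟶ Y` exhibits `X` as the simple socle of `Y` in the category of representations filtered
by a brick `X`. Only the formal consequences used to iterate extensions are recorded. -/
structure IsSocle (s : X ⟶ Y) : Prop where
  monic : IsMonic s
  factors : ∀ f : X ⟶ Y, ∃ d : X ⟶ X, d ≫ s = f
  exists_hom_ne_zero : ∀ {N : QRep k Q} (g : Y ⟶ N), g ≠ 0 → ∃ u : X ⟶ N, u ≠ 0

theorem isSocle_id (X : QRep k Q) : IsSocle (𝟙 X) :=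
  ⟨isMonic_of_isIso _, fun f => ⟨f, Category.comp_id f⟩, fun g hg => ⟨g, hg⟩⟩

theorem IsSocle.indec {s : X ⟶ Y} (hs : IsSocle s) (hX : IsBrick X) : Indec Y := by
  have := hs.monic.mono
  have hs0 : s ≠ 0 := hs.monic.ne_zero hX.1
  have hfix {e : Y ⟶ Y} (he : e ≫ e = e) (he0 : e ≠ 0) : s ≫ e = s := by
    obtain ⟨L, i, r, hir, hri⟩ := exists_retract_of_idempotent he
    obtain ⟨u, hu⟩ := hs.exists_hom_ne_zero r fun h => he0 (by simp [← hri, h])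
    have := (isMonic_of_retract hir).mono
    obtain ⟨d, hd⟩ := hs.factors (u ≫ i)
    have := hX.2 d fun h => hu (Limits.zero_of_comp_mono i (by simp [← hd, h]))
    have hie : i ≫ e = i := by rw [← hri, reassoc_of% hir]
    rw [← cancel_epi d, reassoc_of% hd, hie, hd]
  refine indec_iff.2 ⟨id_ne_zero_of_hom_ne_zero hs0, fun e he => ?_⟩
  by_contra! hne
  have hcompl : s ≫ (𝟙 Y - e) = s := hfix (by simp [he]) (sub_ne_zero.2 hne.2.symm)
  exact hs0 (by simpa [hfix he hne.1] using hcompl.symm)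

theorem IsSocle.exists_extension (hX : IsBrick X) (hXX : extDim X X ≠ 0) {s : X ⟶ Y}
    (hs : IsSocle s) :
    ∃ (W : QRep k Q) (ι : X ⟶ W) (g : W ⟶ Y), Nonempty (VertexSplitting ι g) ∧ IsSocle ι := by
  obtain ⟨γ, hγ⟩ := not_forall.1 (mt extDim_eq_zero_iff.2 hXX)
  obtain ⟨ρ, hρ⟩ := hs.monic
  obtain ⟨W, ι, g, S, -, hretr⟩ :=
    QRep.exists_extension (A := X) (C := Y) fun x => γ x * ρ (Q.src x)
  have hlift (f : X ⟶ W) : f ≫ g ≠ s := fun hf => by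
    refine hγ ⟨fun i => S.retr i * f i, funext fun x => ?_⟩
    calc S.retr (Q.tgt x) * f (Q.tgt x) * X.mat x - X.mat x * (S.retr (Q.src x) * f (Q.src x))
        = γ x * (ρ (Q.src x) * (f ≫ g) (Q.src x)) := by
          rw [Matrix.mul_assoc, comm, ← Matrix.mul_assoc, hretr, Matrix.add_mul, comp_apply]
          simp only [Matrix.mul_assoc, add_sub_cancel_left]
      _ = γ x := by rw [hf, hρ, Matrix.mul_one]
  refine ⟨W, ι, g, ⟨S⟩, S.isMonic, fun f => ?_, fun h hh => ?_⟩
  · obtain ⟨d, hd⟩ := hs.factors (f ≫ g)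
    have hd0 : d = 0 := by
      by_contra hne
      have := hX.2 d hne
      exact hlift (inv d ≫ f) (by rw [Category.assoc, ← hd, IsIso.inv_hom_id_assoc])
    exact S.exists_lift (by rw [← hd, hd0, Limits.zero_comp])
  · by_cases hι : ι ≫ h = 0
    · obtain ⟨h', rfl⟩ := S.exists_desc hι
      exact hs.exists_hom_ne_zero h' fun h0 => hh (by rw [h0, Limits.comp_zero])
    · exact ⟨ι ≫ h, hι⟩

theorem exists_indec_of_le_totalDim (hP : Thick P) (hPX : P X) (hX : IsBrick X)
    (hXX : extDim X X ≠ 0) (n : ℕ) : ∃ Y, P Y ∧ Indec Y ∧ n ≤ totalDim Y := by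
  suffices ∃ (Y : QRep k Q) (s : X ⟶ Y), P Y ∧ IsSocle s ∧ n ≤ totalDim Y by
    obtain ⟨Y, s, hY, hs, hn⟩ := this
    exact ⟨Y, hY, hs.indec hX, hn⟩
  induction n with
  | zero => exact ⟨X, 𝟙 X, hPX, isSocle_id X, Nat.zero_le _⟩
  | succ n ih =>
    obtain ⟨Y, s, hY, hs, hn⟩ := ih
    obtain ⟨W, ι, g, ⟨S⟩, hι⟩ := hs.exists_extension hX hXX
    refine ⟨W, ι, (hP.2.2 X W Y ι g S.isSES).2.1 hPX hY, hι, hn.trans_lt ?_⟩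
    refine S.isEpic.totalDim_le.lt_of_not_ge fun hle => S.isMonic.ne_zero hX.1 ?_
    have := S.isEpic.isIso hle
    exact Limits.zero_of_comp_mono g S.comp_eq_zero

theorem exists_indec_forall_not_isoRep (h : ∀ n, ∃ Y, P Y ∧ Indec Y ∧ n ≤ totalDim Y)
    (l : List (QRep k Q)) : ∃ Y, P Y ∧ Indec Y ∧ ∀ N ∈ l, ¬ IsoRep Y N := by
  obtain ⟨Y, hY, hYi, hn⟩ := h ((l.map totalDim).sum + 1)
  refine ⟨Y, hY, hYi, fun N hN hYN => ?_⟩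
  have hle : totalDim N ≤ (l.map totalDim).sum := List.le_sum_of_mem (List.mem_map_of_mem hN)
  exact (Nat.lt_of_succ_le hn).not_ge (hYN.totalDim_eq ▸ hle)

end QRep

open QRep in
theorem infinitely_many_indecs_general (k : Type) [Field k] (Q : FinQuiver)
    (C : QRep k Q → Prop) (hC : Thick C)
    (X : QRep k Q) (hX : C X) (hXind : Indec X) (hXne : extDim X X ≠ 0) :
    ∀ l : List (QRep k Q), ∃ M : QRep k Q, C M ∧ Indec M ∧ ∀ N ∈ l, ¬ IsoRep M N := by
  obtain ⟨Y, hY, hYbrick, hYY⟩ := exists_isBrick hC hX hXind hXne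
  exact exists_indec_forall_not_isoRep (exists_indec_of_le_totalDim hC hY hYbrick hYY)

open QRep in
/-- an abelian extension-closed (= thick) subcategory of rep(Q),
`Q` Euclidean, contained in the regular representations and containing a
non-exceptional indecomposable, contains infinitely many pairwise non-isomorphic
indecomposables. -/
theorem infinitely_many_indecs (k : Type) [Field k] [IsAlgClosed k]
    (Q : FinQuiver) (hQ : Q.IsEuclidean) (δ : Fin Q.n → ℤ) (hδ : Q.IsNullRoot δ)
    (C : QRep k Q → Prop) (hC : Thick C)
    (hreg : ∀ M, C M → RegularRep δ M)
    (X : QRep k Q) (hX : C X) (hXind : Indec X) (hXne : extDim X X ≠ 0) :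
    ∀ l : List (QRep k Q), ∃ M : QRep k Q, C M ∧ Indec M ∧
      ∀ N ∈ l, ¬ IsoRep M N :=
  infinitely_many_indecs_general k Q C hC X hX hXind hXne
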